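/- arXiv:1706.04079 — 2 statements merged into one kernel-verified Lean document; each statement's English description precedes it below -/
import Mathlib

section
/- Let μ be a finite positive Borel measure on [0,1). The following conditions are equivalent: (i) ∫_{[0,1)} dμ(t)/(1-t) < ∞; (ii) ∑_{n=0}^∞ μ_n < ∞; (iii) the operator I_μ is well defined on H^∞ and bounded from H^∞ into itself; (iv) the operator H_μ is well defined on H^∞ and bounded from H^∞ into itself. -/
open MeasureTheory Set Metric ENNReal

noncomputable section

namespace PaperHankel

/-- The moment of order `n` of a measure on `[0,1)`:  `μ_n = ∫_{[0,1)} t^n dμ(t)`. -/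
def mom (μ : Measure ℝ) (n : ℕ) : ℝ := ∫ t in Ico (0:ℝ) 1, t ^ n ∂μ

/-- The `n`-th Taylor coefficient of `f` at `0`. -/
def tc (f : ℂ → ℂ) (n : ℕ) : ℂ := iteratedDeriv n f 0 / n.factorial

/-- The `n`-th Taylor coefficient of `H_μ f`, namely `∑_k μ_{n+k} a_k`. -/
def hmuCoeff (μ : Measure ℝ) (f : ℂ → ℂ) (n : ℕ) : ℂ :=
  ∑' k : ℕ, (mom μ (n + k) : ℂ) * tc f k

/-- `H_μ f` is well defined: each coefficient series converges absolutely, and the resulting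
power series has radius of convergence at least `1`. -/
def HmuWD (μ : Measure ℝ) (f : ℂ → ℂ) : Prop :=
  (∀ n : ℕ, Summable fun k : ℕ => ‖(mom μ (n + k) : ℂ) * tc f k‖) ∧
  ∀ z ∈ ball (0:ℂ) 1, Summable fun n : ℕ => ‖hmuCoeff μ f n * z ^ n‖

/-- The generalized Hilbert operator induced by the Hankel matrix of moments of `μ`. -/
def Hmu (μ : Measure ℝ) (f : ℂ → ℂ) : ℂ → ℂ :=
  fun z => ∑' n : ℕ, hmuCoeff μ f n * z ^ n

/-- `I_μ f` is well defined: the defining integral converges absolutely for every `z ∈ 𝔻`. -/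
def ImuWD (μ : Measure ℝ) (f : ℂ → ℂ) : Prop :=
  ∀ z ∈ ball (0:ℂ) 1, IntegrableOn (fun t : ℝ => f t / (1 - t * z)) (Ico (0:ℝ) 1) μ

/-- The integral operator `I_μ f (z) = ∫_{[0,1)} f(t)/(1-tz) dμ(t)`. -/
def Imu (μ : Measure ℝ) (f : ℂ → ℂ) : ℂ → ℂ :=
  fun z => ∫ t in Ico (0:ℝ) 1, f t / (1 - t * z) ∂μ

/-- The `p`-th circle mean `M_p(r,f)` raised into the Hardy norm shape:
`((1/2π) ∫_0^{2π} |f(r e^{iθ})|^p dθ)^{1/p}`. -/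
def circMean (p : ℝ) (f : ℂ → ℂ) (r : ℝ) : ℝ :=
  ((2 * Real.pi)⁻¹ * ∫ θ in (0:ℝ)..(2 * Real.pi),
      ‖f (r * Complex.exp (θ * Complex.I))‖ ^ p) ^ (1 / p)

/-- Membership in the Hardy space `H^p`. -/
def MemHardy (p : ℝ) (f : ℂ → ℂ) : Prop :=
  DifferentiableOn ℂ f (ball (0:ℂ) 1) ∧ ∃ M : ℝ, ∀ r ∈ Ico (0:ℝ) 1, circMean p f r ≤ M

/-- The `H^p` norm. -/
def hardyNorm (p : ℝ) (f : ℂ → ℂ) : ℝ :=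
  sSup {x : ℝ | ∃ r ∈ Ico (0:ℝ) 1, x = circMean p f r}

/-- Membership in `H^∞`: analytic and bounded on the unit disc. -/
def MemHinf (f : ℂ → ℂ) : Prop :=
  DifferentiableOn ℂ f (ball (0:ℂ) 1) ∧ ∃ M : ℝ, ∀ z ∈ ball (0:ℂ) 1, ‖f z‖ ≤ M

/-- The `H^∞` norm. -/
def hinfNorm (f : ℂ → ℂ) : ℝ := sSup {x : ℝ | ∃ z ∈ ball (0:ℂ) 1, x = ‖f z‖}

/-- The mean `M_2(r,g) = ((1/2π) ∫_0^{2π} |g(r e^{iθ})|² dθ)^{1/2}`. -/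
def M2 (g : ℂ → ℂ) (r : ℝ) : ℝ :=
  Real.sqrt ((2 * Real.pi)⁻¹ * ∫ θ in (0:ℝ)..(2 * Real.pi),
      ‖g (r * Complex.exp (θ * Complex.I))‖ ^ 2)

/-- Membership in the mean Lipschitz space `Λ²_{1/2}`:
`M_2(r,f') = O((1-r)^{-1/2})` as `r → 1⁻`. -/
def MemLambda (f : ℂ → ℂ) : Prop :=
  DifferentiableOn ℂ f (ball (0:ℂ) 1) ∧
  ∃ C : ℝ, ∀ r ∈ Ico (0:ℝ) 1, Real.sqrt (1 - r) * M2 (deriv f) r ≤ C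

/-- The norm on `Λ²_{1/2}`. -/
def lambdaNorm (f : ℂ → ℂ) : ℝ :=
  ‖f 0‖ + sSup {x : ℝ | ∃ r ∈ Ico (0:ℝ) 1, x = Real.sqrt (1 - r) * M2 (deriv f) r}

/-- `∫_𝔻 |f'(z)|² g(z,a)^s dA(z)` with `g(z,a) = log |(1- ā z)/(z-a)|` and `dA` the
normalized area measure, computed as a lower integral in `[0,∞]`. -/
def qsInt (s : ℝ) (f : ℂ → ℂ) (a : ℂ) : ℝ≥0∞ :=
  (ENNReal.ofReal Real.pi)⁻¹ * ∫⁻ z in ball (0:ℂ) 1,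
    ENNReal.ofReal (‖deriv f z‖ ^ 2 * (Real.log ‖(1 - (starRingEnd ℂ) a * z) / (z - a)‖) ^ s)

/-- Membership in `Q_s`: analytic on `𝔻` with `ρ_{Q_s}(f)² = sup_{a ∈ 𝔻} ∫ ... < ∞`. -/
def MemQs (s : ℝ) (f : ℂ → ℂ) : Prop :=
  DifferentiableOn ℂ f (ball (0:ℂ) 1) ∧ (⨆ a ∈ ball (0:ℂ) 1, qsInt s f a) < ⊤

/-- The norm on `Q_s`, `‖f‖ = |f(0)| + ρ_{Q_s}(f)`. -/
def qsNorm (s : ℝ) (f : ℂ → ℂ) : ℝ :=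
  ‖f 0‖ + Real.sqrt (⨆ a ∈ ball (0:ℂ) 1, qsInt s f a).toReal

/-- The condition `∫_{[0,1)} tⁿ log(1/(1-t)) dμ(t) = O(1/n)`, stated with the lower
integral so that in particular the integrals are finite. -/
def LogMomentBigO (μ : Measure ℝ) : Prop :=
  ∃ C > 0, ∀ n : ℕ, 1 ≤ n →
    (∫⁻ t in Ico (0:ℝ) 1, ENNReal.ofReal (t ^ n * Real.log (1 / (1 - t))) ∂μ) ≤
      ENNReal.ofReal (C / n)

/-- Membership in the Bloch space. -/
def MemBloch (f : ℂ → ℂ) : Prop :=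
  DifferentiableOn ℂ f (ball (0:ℂ) 1) ∧
  ∃ M : ℝ, ∀ z ∈ ball (0:ℂ) 1, (1 - ‖z‖ ^ 2) * ‖deriv f z‖ ≤ M

/-- The Bloch norm `‖f‖ = |f(0)| + ρ_B(f)`. -/
def blochNorm (f : ℂ → ℂ) : ℝ :=
  ‖f 0‖ + sSup {x : ℝ | ∃ z ∈ ball (0:ℂ) 1, x = (1 - ‖z‖ ^ 2) * ‖deriv f z‖}

/-- Membership in the Besov space `B^p`. -/
def MemBesov (p : ℝ) (f : ℂ → ℂ) : Prop :=
  DifferentiableOn ℂ f (ball (0:ℂ) 1) ∧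
  IntegrableOn (fun z : ℂ => (1 - ‖z‖ ^ 2) ^ (p - 2) * ‖deriv f z‖ ^ p) (ball (0:ℂ) 1) volume

/-- The Besov norm `‖f‖ = |f(0)| + ρ_p(f)`. -/
def besovNorm (p : ℝ) (f : ℂ → ℂ) : ℝ :=
  ‖f 0‖ + (Real.pi⁻¹ *
    ∫ z in ball (0:ℂ) 1, (1 - ‖z‖ ^ 2) ^ (p - 2) * ‖deriv f z‖ ^ p) ^ (1 / p)

/-- `μ` is an `α`-logarithmic `s`-Carleson measure on `[0,1)`. -/
def IsLogCarleson (μ : Measure ℝ) (α s : ℝ) : Prop :=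
  ∃ C > 0, ∀ t ∈ Ico (0:ℝ) 1,
    (μ (Ico t 1)).toReal * Real.log (2 / (1 - t)) ^ α ≤ C * (1 - t) ^ s

/-- `μ` is an `s`-Carleson measure on `[0,1)`. -/
def IsCarleson (μ : Measure ℝ) (s : ℝ) : Prop :=
  ∃ C > 0, ∀ t ∈ Ico (0:ℝ) 1, (μ (Ico t 1)).toReal ≤ C * (1 - t) ^ s

/-!
Expanding the geometric series `1 / (1 - t z)`, or else the Taylor series of `f`, exhibits both
`I_μ f` and `H_μ f` as the power series whose coefficients are the moments `∫ tⁿ f(t) dμ(t)`. These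
are at most `μ_n ‖f‖_{H^∞}`, so `∑ μ_n < ∞` makes both operators bounded. Conversely, `f = 1` has
image `∑ μ_n zⁿ`, and a power series with nonnegative coefficients that is bounded on `[0, 1)` has
summable coefficients. Finally `∑ μ_n = ∫ dμ(t) / (1 - t)` by Tonelli.
-/

section Integral

variable {α : Type*} {m : MeasurableSpace α} {ν : Measure α}

lemma integrable_inv_one_sub_iff_summable_integral_pow [IsFiniteMeasure ν] {u : α → ℝ}
    (hu : AEMeasurable u ν) (hu01 : ∀ᵐ a ∂ν, u a ∈ Ico (0 : ℝ) 1) :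
    Integrable (fun a => (1 - u a)⁻¹) ν ↔ Summable fun n : ℕ => ∫ a, u a ^ n ∂ν := by
  have integral_pow_nonneg (n : ℕ) : 0 ≤ ∫ a, u a ^ n ∂ν :=
    integral_nonneg_of_ae (hu01.mono fun a ha => pow_nonneg ha.1 n)
  have ofReal_integral_pow (n : ℕ) :
      ENNReal.ofReal (∫ a, u a ^ n ∂ν) = ∫⁻ a, ENNReal.ofReal (u a ^ n) ∂ν := by
    refine ofReal_integral_eq_lintegral_ofReal (.of_mem_Icc 0 1 (hu.pow_const n) ?_) ?_
    · exact hu01.mono fun a ha => ⟨pow_nonneg ha.1 n, pow_le_one₀ ha.1 ha.2.le⟩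
    · exact hu01.mono fun a ha => pow_nonneg ha.1 n
  have tonelli : ∫⁻ a, ENNReal.ofReal (1 - u a)⁻¹ ∂ν =
      ∑' n : ℕ, ENNReal.ofReal (∫ a, u a ^ n ∂ν) := by
    simp_rw [ofReal_integral_pow]
    rw [← lintegral_tsum fun n => (hu.pow_const n).ennreal_ofReal]
    refine lintegral_congr_ae (hu01.mono fun a ha => ?_)
    simp only
    rw [← tsum_geometric_of_lt_one ha.1 ha.2, ENNReal.ofReal_tsum_of_nonneg
      (fun n => pow_nonneg ha.1 n) (summable_geometric_of_lt_one ha.1 ha.2)]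
  have aestronglyMeasurable_inv : AEStronglyMeasurable (fun a => (1 - u a)⁻¹) ν :=
    (hu.const_sub 1).inv.aestronglyMeasurable
  rw [← lintegral_ofReal_ne_top_iff_integrable aestronglyMeasurable_inv
    (hu01.mono fun a ha => inv_nonneg.2 (sub_nonneg.2 ha.2.le)), tonelli]
  refine ⟨fun h => ?_, Summable.tsum_ofReal_ne_top⟩
  simpa only [ENNReal.toReal_ofReal (integral_pow_nonneg _)] using ENNReal.summable_toReal h

variable {𝕜 : Type*} [RCLike 𝕜] {g u : α → 𝕜} {r : ℝ}

lemma integrable_div_one_sub (hg : Integrable g ν) (hu : AEStronglyMeasurable u ν) (hr : r < 1)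
    (hur : ∀ᵐ a ∂ν, ‖u a‖ ≤ r) : Integrable (fun a => g a / (1 - u a)) ν := by
  simp_rw [div_eq_mul_inv]
  have hu_inv : AEStronglyMeasurable (fun a => (1 - u a)⁻¹) ν :=
    (hu.aemeasurable.const_sub 1).inv.aestronglyMeasurable
  refine hg.mul_bdd (c := (1 - r)⁻¹) hu_inv (hur.mono fun a ha => ?_)
  have one_sub_le_norm : 1 - r ≤ ‖1 - u a‖ := by
    have := norm_sub_norm_le 1 (u a)
    rw [norm_one] at this
    linarith
  rw [norm_inv]
  exact inv_anti₀ (sub_pos.2 hr) one_sub_le_norm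

lemma hasSum_integral_mul_pow (hg : Integrable g ν) (hu : AEStronglyMeasurable u ν) (hr : r < 1)
    (hur : ∀ᵐ a ∂ν, ‖u a‖ ≤ r) :
    HasSum (fun n : ℕ => ∫ a, g a * u a ^ n ∂ν) (∫ a, g a / (1 - u a) ∂ν) := by
  have norm_pow_le (n : ℕ) : ∀ᵐ a ∂ν, ‖u a ^ n‖ ≤ r ^ n := hur.mono fun a ha => by
    rw [norm_pow]
    exact pow_le_pow_left₀ (norm_nonneg _) ha n
  have integrable_term (n : ℕ) : Integrable (fun a => g a * u a ^ n) ν :=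
    hg.mul_bdd (hu.pow n) (norm_pow_le n)
  have integral_norm_le (n : ℕ) : ∫ a, ‖g a * u a ^ n‖ ∂ν ≤ (∫ a, ‖g a‖ ∂ν) * r ^ n := by
    rw [← integral_mul_const]
    refine integral_mono_ae (integrable_term n).norm (hg.norm.mul_const _) ?_
    filter_upwards [norm_pow_le n] with a ha
    rw [norm_mul]
    gcongr
  have summable_norm : Summable fun n : ℕ => ∫ a, ‖g a * u a ^ n‖ ∂ν := by
    rcases (ae ν).eq_or_neBot with hν | hν
    · simp [ae_eq_bot.1 hν, summable_zero]
    obtain ⟨a, ha⟩ := hur.exists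
    exact .of_nonneg_of_le (fun n => integral_nonneg fun a => norm_nonneg _) integral_norm_le
      ((summable_geometric_of_lt_one ((norm_nonneg _).trans ha) hr).mul_left _)
  have tsum_term : ∀ᵐ a ∂ν, ∑' n : ℕ, g a * u a ^ n = g a / (1 - u a) := hur.mono fun a ha => by
    rw [tsum_mul_left, tsum_geometric_of_norm_lt_one (ha.trans_lt hr), div_eq_mul_inv]
  rw [← integral_congr_ae tsum_term]
  exact hasSum_integral_of_summable_integral_norm integrable_term summable_norm

end Integral

section PowerSeries

lemma le_of_forall_mem_Ioo_le {g : ℝ → ℝ} {a b M : ℝ} (hg : Continuous g) (hab : a < b)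
    (h : ∀ r ∈ Ioo a b, g r ≤ M) : g b ≤ M :=
  le_on_closure h hg.continuousOn continuousOn_const
    (closure_Ioo hab.ne ▸ right_mem_Icc.2 hab.le)

lemma summable_of_hasSum_mul_pow_of_le {a : ℕ → ℝ} {F : ℝ → ℝ} {M : ℝ} (ha : ∀ n, 0 ≤ a n)
    (hF : ∀ r ∈ Ioo (0 : ℝ) 1, HasSum (fun n => a n * r ^ n) (F r))
    (hM : ∀ r ∈ Ioo (0 : ℝ) 1, F r ≤ M) : Summable a := by
  refine summable_of_sum_range_le (c := M) ha fun N => ?_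
  have sum_mul_pow_le (r : ℝ) (hr : r ∈ Ioo (0 : ℝ) 1) :
      ∑ n ∈ Finset.range N, a n * r ^ n ≤ M :=
    (sum_le_hasSum _ (fun n _ => mul_nonneg (ha n) (pow_nonneg hr.1.le n)) (hF r hr)).trans
      (hM r hr)
  simpa only [one_pow, mul_one] using
    le_of_forall_mem_Ioo_le (by fun_prop) zero_lt_one sum_mul_pow_le

variable {f : ℂ → ℂ}

lemma hasSum_tc_mul_pow (hf : DifferentiableOn ℂ f (ball 0 1)) {z : ℂ} (hz : z ∈ ball (0 : ℂ) 1) :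
    HasSum (fun k => tc f k * z ^ k) (f z) := by
  have tc_mul_pow (k : ℕ) :
      tc f k * z ^ k = (k.factorial : ℂ)⁻¹ • (z - 0) ^ k • iteratedDeriv k f 0 := by
    simp only [tc, smul_eq_mul, sub_zero]
    ring
  simpa only [tc_mul_pow] using Complex.hasSum_taylorSeries_on_ball hf hz

lemma norm_tc_le {M : ℝ} (hf : DifferentiableOn ℂ f (ball 0 1))
    (hM : ∀ z ∈ ball (0 : ℂ) 1, ‖f z‖ ≤ M) (k : ℕ) : ‖tc f k‖ ≤ M := by
  have cauchy (R : ℝ) (hR : R ∈ Ioo (0 : ℝ) 1) : ‖tc f k‖ * R ^ k ≤ M := by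
    have hsub : closedBall (0 : ℂ) R ⊆ ball 0 1 := closedBall_subset_ball hR.2
    have := Complex.norm_iteratedDeriv_le_of_forall_mem_sphere_norm_le k hR.1
      ((hf.mono hsub).diffContOnCl_ball subset_rfl)
      fun z hz => hM z (hsub (sphere_subset_closedBall hz))
    have hk : (0 : ℝ) < k.factorial := by exact_mod_cast k.factorial_pos
    rwa [tc, norm_div, Complex.norm_natCast, ← le_div_iff₀ (pow_pos hR.1 k), div_le_iff₀' hk,
      ← mul_div_assoc]
  simpa only [one_pow, mul_one] using
    le_of_forall_mem_Ioo_le (by fun_prop) zero_lt_one cauchy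

end PowerSeries

section Hinf

variable {f : ℂ → ℂ} {c : ℕ → ℂ}

lemma MemHinf.norm_le_hinfNorm (hf : MemHinf f) {z : ℂ} (hz : z ∈ ball (0 : ℂ) 1) :
    ‖f z‖ ≤ hinfNorm f := by
  obtain ⟨M, hM⟩ := hf.2
  refine le_csSup ⟨M, ?_⟩ ⟨z, hz, rfl⟩
  rintro _ ⟨w, hw, rfl⟩
  exact hM w hw

lemma hinfNorm_le {M : ℝ} (hM : ∀ z ∈ ball (0 : ℂ) 1, ‖f z‖ ≤ M) : hinfNorm f ≤ M := by
  refine csSup_le ⟨_, 0, mem_ball_self one_pos, rfl⟩ ?_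
  rintro _ ⟨w, hw, rfl⟩
  exact hM w hw

lemma hinfNorm_nonneg (f : ℂ → ℂ) : 0 ≤ hinfNorm f := by
  refine Real.sSup_nonneg ?_
  rintro _ ⟨w, -, rfl⟩
  exact norm_nonneg _

lemma memHinf_one : MemHinf 1 :=
  ⟨differentiableOn_const 1, 1, fun _ _ => norm_one.le⟩

lemma norm_mul_pow_le (w : ℂ) {z : ℂ} (hz : ‖z‖ ≤ 1) (n : ℕ) : ‖w * z ^ n‖ ≤ ‖w‖ := by
  rw [norm_mul, norm_pow]
  exact mul_le_of_le_one_right (norm_nonneg _) (pow_le_one₀ (norm_nonneg _) hz)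

lemma norm_le_tsum_norm_of_hasSum (hc : Summable fun n => ‖c n‖) {z w : ℂ} (hz : ‖z‖ ≤ 1)
    (hw : HasSum (fun n => c n * z ^ n) w) : ‖w‖ ≤ ∑' n, ‖c n‖ :=
  hw.norm_le_of_bounded hc.hasSum fun n => norm_mul_pow_le (c n) hz n

lemma memHinf_of_hasSum (hc : Summable fun n => ‖c n‖)
    (hf : ∀ z ∈ ball (0 : ℂ) 1, HasSum (fun n => c n * z ^ n) (f z)) : MemHinf f := by
  have norm_le_one {z : ℂ} (hz : z ∈ ball (0 : ℂ) 1) : ‖z‖ ≤ 1 := (mem_ball_zero_iff.1 hz).le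
  refine ⟨?_, ∑' n, ‖c n‖, fun z hz =>
    norm_le_tsum_norm_of_hasSum hc (norm_le_one hz) (hf z hz)⟩
  have differentiableOn_tsum : DifferentiableOn ℂ (fun z => ∑' n, c n * z ^ n) (ball 0 1) :=
    Complex.differentiableOn_tsum_of_summable_norm hc (fun n => by fun_prop) isOpen_ball
      fun n z hz => norm_mul_pow_le (c n) (norm_le_one hz) n
  exact differentiableOn_tsum.congr fun z hz => (hf z hz).tsum_eq.symm

lemma ofReal_mem_ball {t : ℝ} (ht : t ∈ Ico (0 : ℝ) 1) : (t : ℂ) ∈ ball (0 : ℂ) 1 := by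
  simpa [abs_of_nonneg ht.1] using ht.2

lemma MemHinf.summable_of_hasSum (hf : MemHinf f) {a : ℕ → ℝ} (ha : ∀ n, 0 ≤ a n)
    (hsum : ∀ z ∈ ball (0 : ℂ) 1, HasSum (fun n => (a n : ℂ) * z ^ n) (f z)) : Summable a := by
  have ofReal_mem {r : ℝ} (hr : r ∈ Ioo (0 : ℝ) 1) := ofReal_mem_ball (Ioo_subset_Ico_self hr)
  refine summable_of_hasSum_mul_pow_of_le (F := fun r => (f r).re) ha (fun r hr => ?_)
    fun r hr => (Complex.re_le_norm _).trans (hf.norm_le_hinfNorm (ofReal_mem hr))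
  simpa only [← Complex.ofReal_pow, ← Complex.ofReal_mul, Complex.ofReal_re] using
    Complex.hasSum_re (hsum r (ofReal_mem hr))

/-- `T`, with well-definedness predicate `WD`, is a bounded operator from `H^∞` into itself; this
is the common shape of the conditions on `I_μ` and `H_μ`. -/
def BoundedOnHinf (WD : (ℂ → ℂ) → Prop) (T : (ℂ → ℂ) → ℂ → ℂ) : Prop :=
  (∀ f : ℂ → ℂ, MemHinf f → WD f ∧ MemHinf (T f)) ∧
    ∃ C > 0, ∀ f : ℂ → ℂ, MemHinf f → hinfNorm (T f) ≤ C * hinfNorm f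

end Hinf

section Moments

lemma norm_ofReal_mul_le {t : ℝ} (ht : t ∈ Ico (0 : ℝ) 1) (z : ℂ) : ‖(t : ℂ) * z‖ ≤ ‖z‖ := by
  rw [norm_mul, Complex.norm_of_nonneg ht.1]
  exact mul_le_of_le_one_left (norm_nonneg z) ht.2.le

/-- The moment `∫_{[0,1)} tⁿ f(t) dμ(t)` of the complex measure `f dμ`: the common `n`-th Taylor
coefficient of `I_μ f` and `H_μ f`. -/
def weightedMom (μ : Measure ℝ) (f : ℂ → ℂ) (n : ℕ) : ℂ :=
  ∫ t in Ico (0 : ℝ) 1, (t : ℂ) ^ n * f t ∂μ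

variable {μ : Measure ℝ} {f : ℂ → ℂ}

lemma mom_nonneg (μ : Measure ℝ) (n : ℕ) : 0 ≤ mom μ n :=
  setIntegral_nonneg measurableSet_Ico fun _ ht => pow_nonneg ht.1 n

lemma weightedMom_one (μ : Measure ℝ) (n : ℕ) : weightedMom μ 1 n = mom μ n := by
  simp only [weightedMom, mom, Pi.one_apply, mul_one, ← Complex.ofReal_pow, integral_complex_ofReal]

lemma hasSum_Imu (hf : IntegrableOn (fun t : ℝ => f t) (Ico 0 1) μ) {z : ℂ}
    (hz : z ∈ ball (0 : ℂ) 1) : HasSum (fun n => weightedMom μ f n * z ^ n) (Imu μ f z) := by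
  have integral_term (n : ℕ) :
      ∫ t in Ico (0 : ℝ) 1, f t * (t * z) ^ n ∂μ = weightedMom μ f n * z ^ n := by
    rw [weightedMom, ← integral_mul_const]
    congr 1 with t
    ring
  simpa only [integral_term, Imu] using hasSum_integral_mul_pow hf (by fun_prop)
    (mem_ball_zero_iff.1 hz)
    (ae_restrict_of_forall_mem measurableSet_Ico fun t ht => norm_ofReal_mul_le ht z)

lemma imuWD_of_integrableOn (hf : IntegrableOn (fun t : ℝ => f t) (Ico 0 1) μ) : ImuWD μ f :=
  fun z hz => integrable_div_one_sub hf (by fun_prop) (mem_ball_zero_iff.1 hz)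
    (ae_restrict_of_forall_mem measurableSet_Ico fun _ ht => norm_ofReal_mul_le ht z)

variable [IsFiniteMeasure μ]

lemma integrableOn_pow (n : ℕ) : IntegrableOn (fun t : ℝ => t ^ n) (Ico 0 1) μ :=
  .of_mem_Icc 0 1 (by fun_prop) <| ae_restrict_of_forall_mem measurableSet_Ico fun _ ht =>
    ⟨pow_nonneg ht.1 n, pow_le_one₀ ht.1 ht.2.le⟩

lemma integrableOn_inv_one_sub_iff_summable_mom :
    IntegrableOn (fun t : ℝ => (1 - t)⁻¹) (Ico 0 1) μ ↔ Summable (mom μ) :=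
  integrable_inv_one_sub_iff_summable_integral_pow aemeasurable_id
    (ae_restrict_mem measurableSet_Ico)

lemma MemHinf.integrableOn (hf : MemHinf f) : IntegrableOn (fun t : ℝ => f t) (Ico 0 1) μ := by
  have hcont : ContinuousOn (fun t : ℝ => f t) (Ico 0 1) :=
    hf.1.continuousOn.comp Complex.continuous_ofReal.continuousOn fun _ ht => ofReal_mem_ball ht
  exact Integrable.of_bound (hcont.aestronglyMeasurable measurableSet_Ico) (hinfNorm f) <|
    ae_restrict_of_forall_mem measurableSet_Ico fun _ ht => hf.norm_le_hinfNorm (ofReal_mem_ball ht)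

lemma MemHinf.norm_weightedMom_le (hf : MemHinf f) (n : ℕ) :
    ‖weightedMom μ f n‖ ≤ mom μ n * hinfNorm f := by
  rw [mom, ← integral_mul_const]
  refine norm_integral_le_of_norm_le ((integrableOn_pow n).mul_const _) <|
    ae_restrict_of_forall_mem measurableSet_Ico fun t ht => ?_
  rw [norm_mul, norm_pow, Complex.norm_of_nonneg ht.1]
  exact mul_le_mul_of_nonneg_left (hf.norm_le_hinfNorm (ofReal_mem_ball ht)) (pow_nonneg ht.1 n)

lemma hmuCoeff_eq_weightedMom (hf : DifferentiableOn ℂ f (ball 0 1)) {n : ℕ}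
    (hs : Summable fun k : ℕ => ‖(mom μ (n + k) : ℂ) * tc f k‖) :
    hmuCoeff μ f n = weightedMom μ f n := by
  have integral_term (k : ℕ) : ∫ t in Ico (0 : ℝ) 1, ((t ^ (n + k) : ℝ) : ℂ) * tc f k ∂μ =
      mom μ (n + k) * tc f k := by
    rw [integral_mul_const, integral_complex_ofReal, mom]
  have integral_norm_term (k : ℕ) :
      ∫ t in Ico (0 : ℝ) 1, ‖((t ^ (n + k) : ℝ) : ℂ) * tc f k‖ ∂μ =
        ‖(mom μ (n + k) : ℂ) * tc f k‖ := by
    rw [norm_mul, Complex.norm_of_nonneg (mom_nonneg μ _), mom, ← integral_mul_const]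
    refine setIntegral_congr_fun measurableSet_Ico fun t ht => ?_
    simp only [norm_mul, Complex.norm_of_nonneg (pow_nonneg ht.1 (n + k))]
  have tsum_term (t : ℝ) (ht : t ∈ Ico (0 : ℝ) 1) :
      ∑' k : ℕ, ((t ^ (n + k) : ℝ) : ℂ) * tc f k = (t : ℂ) ^ n * f t := by
    rw [← (hasSum_tc_mul_pow hf (ofReal_mem_ball ht)).tsum_eq, ← tsum_mul_left]
    congr 1 with k
    push_cast
    ring
  have fubini := hasSum_integral_of_summable_integral_norm
    (F := fun k (t : ℝ) => ((t ^ (n + k) : ℝ) : ℂ) * tc f k)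
    (fun k => (integrableOn_pow (μ := μ) (n + k)).ofReal.mul_const (tc f k))
    (hs.congr fun k => (integral_norm_term k).symm)
  simp only [integral_term] at fubini
  rw [hmuCoeff, fubini.tsum_eq, weightedMom]
  exact setIntegral_congr_fun measurableSet_Ico tsum_term

lemma HmuWD.hasSum_Hmu (hf : DifferentiableOn ℂ f (ball 0 1)) (hwd : HmuWD μ f) {z : ℂ}
    (hz : z ∈ ball (0 : ℂ) 1) : HasSum (fun n => weightedMom μ f n * z ^ n) (Hmu μ f z) := by
  simp only [← hmuCoeff_eq_weightedMom hf (hwd.1 _)]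
  exact (hwd.2 z hz).of_norm.hasSum

lemma MemHinf.hmuWD (hf : MemHinf f) (hμ : Summable (mom μ)) : HmuWD μ f := by
  have summable_coeff (n : ℕ) : Summable fun k : ℕ => ‖(mom μ (n + k) : ℂ) * tc f k‖ := by
    have hshift : Summable fun k => mom μ (n + k) := by
      simpa only [add_comm] using (summable_nat_add_iff n).2 hμ
    refine .of_nonneg_of_le (fun _ => norm_nonneg _) (fun k => ?_) (hshift.mul_right (hinfNorm f))
    rw [norm_mul, Complex.norm_of_nonneg (mom_nonneg μ _)]
    exact mul_le_mul_of_nonneg_left (norm_tc_le hf.1 (fun _ => hf.norm_le_hinfNorm) k)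
      (mom_nonneg μ _)
  refine ⟨summable_coeff, fun z hz => ?_⟩
  refine .of_nonneg_of_le (fun _ => norm_nonneg _) (fun n => ?_) (hμ.mul_right (hinfNorm f))
  rw [hmuCoeff_eq_weightedMom hf.1 (summable_coeff n)]
  exact (norm_mul_pow_le _ (mem_ball_zero_iff.1 hz).le n).trans (hf.norm_weightedMom_le n)

variable {WD : (ℂ → ℂ) → Prop} {T : (ℂ → ℂ) → ℂ → ℂ}

lemma boundedOnHinf_of_summable_mom (hμ : Summable (mom μ)) (hWD : ∀ f, MemHinf f → WD f)
    (hT : ∀ f, MemHinf f → ∀ z ∈ ball (0 : ℂ) 1,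
      HasSum (fun n => weightedMom μ f n * z ^ n) (T f z)) :
    BoundedOnHinf WD T := by
  have summable_norm (f : ℂ → ℂ) (hf : MemHinf f) : Summable fun n => ‖weightedMom μ f n‖ :=
    .of_nonneg_of_le (fun _ => norm_nonneg _) hf.norm_weightedMom_le (hμ.mul_right _)
  have tsum_mom_nonneg : 0 ≤ ∑' n, mom μ n := tsum_nonneg (mom_nonneg μ)
  refine ⟨fun f hf => ⟨hWD f hf, memHinf_of_hasSum (summable_norm f hf) (hT f hf)⟩,
    (∑' n, mom μ n) + 1, by positivity, fun f hf => hinfNorm_le fun z hz => ?_⟩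
  calc ‖T f z‖ ≤ ∑' n, ‖weightedMom μ f n‖ :=
        norm_le_tsum_norm_of_hasSum (summable_norm f hf) (mem_ball_zero_iff.1 hz).le (hT f hf z hz)
    _ ≤ ∑' n, mom μ n * hinfNorm f :=
        (summable_norm f hf).tsum_le_tsum hf.norm_weightedMom_le (hμ.mul_right _)
    _ = (∑' n, mom μ n) * hinfNorm f := tsum_mul_right
    _ ≤ ((∑' n, mom μ n) + 1) * hinfNorm f :=
        mul_le_mul_of_nonneg_right (le_add_of_nonneg_right zero_le_one) (hinfNorm_nonneg f)

lemma boundedOnHinf_iff_summable_mom (hWD : Summable (mom μ) → ∀ f, MemHinf f → WD f)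
    (hT : ∀ f, MemHinf f → WD f → ∀ z ∈ ball (0 : ℂ) 1,
      HasSum (fun n => weightedMom μ f n * z ^ n) (T f z)) :
    BoundedOnHinf WD T ↔ Summable (mom μ) := by
  refine ⟨fun ⟨hmaps, _⟩ => ?_, fun hμ => ?_⟩
  · obtain ⟨hwd, hmem⟩ := hmaps 1 memHinf_one
    refine hmem.summable_of_hasSum (mom_nonneg μ) ?_
    simpa only [weightedMom_one] using hT 1 memHinf_one hwd
  · exact boundedOnHinf_of_summable_mom hμ (hWD hμ) fun f hf => hT f hf (hWD hμ f hf)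

end Moments

/-- Theorem 1.5: equivalent conditions for boundedness of `I_μ` and `H_μ` on `H^∞`. -/
theorem hmu_bounded_Hinf_tfae (μ : Measure ℝ) [IsFiniteMeasure μ]
    (hsupp : μ (Ico (0:ℝ) 1)ᶜ = 0) :
    [ IntegrableOn (fun t : ℝ => (1 - t)⁻¹) (Ico (0:ℝ) 1) μ,
      Summable (mom μ),
      (∀ f : ℂ → ℂ, MemHinf f → ImuWD μ f ∧ MemHinf (Imu μ f)) ∧
        ∃ C > 0, ∀ f : ℂ → ℂ, MemHinf f → hinfNorm (Imu μ f) ≤ C * hinfNorm f,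
      (∀ f : ℂ → ℂ, MemHinf f → HmuWD μ f ∧ MemHinf (Hmu μ f)) ∧
        ∃ C > 0, ∀ f : ℂ → ℂ, MemHinf f → hinfNorm (Hmu μ f) ≤ C * hinfNorm f ].TFAE := by
  tfae_have 1 ↔ 2 := integrableOn_inv_one_sub_iff_summable_mom
  tfae_have 3 ↔ 2 := boundedOnHinf_iff_summable_mom
    (fun _ f hf => imuWD_of_integrableOn hf.integrableOn)
    fun f hf _ _ hz => hasSum_Imu hf.integrableOn hz
  tfae_have 4 ↔ 2 := boundedOnHinf_iff_summable_mom
    (fun hμ f hf => hf.hmuWD hμ)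
    fun f hf hwd _ hz => hwd.hasSum_Hmu hf.1 hz
  tfae_finish

end PaperHankel
end
end

section
/- Suppose 1<p<∞ and let μ be a finite positive Borel measure on [0,1) such that the operator H_μ is well defined on the Besov space B^p and bounded from B^p into itself. Then μ is a (1 - 1/p)-logarithmic 1-Carleson measure. -/
open MeasureTheory Set Metric ENNReal

noncomputable section

namespace PaperHankel

/-!
For `b ∈ [0,1)` put `L = log (2 / (1 - b))`. The function `log 2 - log (1 - b z)` has value at least
`L / 2` at `b`, while a Forelli–Rudin estimate bounds its norm in `B^p` by a multiple of
`L ^ (1 / p)`. Its Taylor coefficients are nonnegative and `μ_n ≥ b ^ n * μ [b,1)`, so summing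
power series at `b` bounds the derivative of its image under `H_μ` at `b` from below by a multiple
of `L * μ [b,1) / (1 - b) ^ 2`, at least for `b` away from `0`. As `B^p` embeds in the Bloch space,
by the submean value property of `|f'| ^ p`, this derivative is also at most a multiple of
`L ^ (1 / p) / (1 - b)`, and comparing the two bounds gives `L ^ (1 - 1 / p) * μ [b,1) ≲ 1 - b`.
-/

open scoped Real

section RealIntegrals

lemma lintegral_Ioo_ofReal {f : ℝ → ℝ} {a b : ℝ} (hab : a ≤ b)
    (hf : IntervalIntegrable f volume a b) (hf0 : ∀ x ∈ Ioo a b, 0 ≤ f x) :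
    ∫⁻ x in Ioo a b, ENNReal.ofReal (f x) = ENNReal.ofReal (∫ x in a..b, f x) := by
  rw [intervalIntegral.integral_of_le hab, integral_Ioc_eq_integral_Ioo,
    ofReal_integral_eq_lintegral_ofReal]
  · exact (intervalIntegrable_iff_integrableOn_Ioo_of_le hab).1 hf
  · exact ae_restrict_of_forall_mem measurableSet_Ioo hf0

lemma integral_add_abs_rpow_neg {s p : ℝ} (hs : 0 < s) (hp : 1 < p) :
    ∫ x : ℝ, (s + |x|) ^ (-p) = 2 * s ^ (1 - p) / (p - 1) := by
  have hshift : ∫ x in Ioi (0 : ℝ), (s + x) ^ (-p) = ∫ x in Ioi s, x ^ (-p) := by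
    simpa only [preimage_const_add_Ioi, sub_self] using
      (measurePreserving_add_left volume s).setIntegral_preimage_emb
        (measurableEmbedding_addLeft s) (fun x => x ^ (-p)) (Ioi s)
  rw [integral_comp_abs (f := fun x => (s + x) ^ (-p)), hshift,
    integral_Ioi_rpow_of_lt (by linarith) hs, show -p + 1 = 1 - p by ring, ← neg_sub p 1,
    neg_div_neg_eq, mul_div_assoc]

lemma lintegral_add_abs_rpow_neg {s p : ℝ} (hs : 0 < s) (hp : 1 < p) :
    ∫⁻ x : ℝ, ENNReal.ofReal ((s + |x|) ^ (-p)) = ENNReal.ofReal (2 * s ^ (1 - p) / (p - 1)) := by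
  have : 0 < p - 1 := sub_pos.2 hp
  rw [← integral_add_abs_rpow_neg hs hp, ofReal_integral_eq_lintegral_ofReal]
  · apply Integrable.of_integral_ne_zero
    rw [integral_add_abs_rpow_neg hs hp]
    positivity
  · exact ae_of_all _ fun x => by positivity

lemma lintegral_rpow_mul_max_rpow {s δ : ℝ} (hs : 0 < s) (hδ : 0 < δ) (hδ1 : δ ≤ 1) :
    ∫⁻ x in Ioo 0 1, ENNReal.ofReal (x ^ (s - 1) * max x δ ^ (-s)) =
      ENNReal.ofReal (1 / s + Real.log (1 / δ)) := by
  set f : ℝ → ℝ := fun x => x ^ (s - 1) * max x δ ^ (-s)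
  have hleft : EqOn (fun x => x ^ (s - 1) * δ ^ (-s)) f (uIoo 0 δ) := fun x hx => by
    rw [uIoo_of_le hδ.le] at hx
    simp only [f, max_eq_right hx.2.le]
  have hright : EqOn (fun x => x⁻¹) f (uIoo δ 1) := fun x hx => by
    rw [uIoo_of_le hδ1] at hx
    simp only [f, max_eq_left hx.1.le]
    rw [← Real.rpow_add (hδ.trans hx.1), show s - 1 + -s = -1 by ring, Real.rpow_neg_one]
  have hf_left : IntervalIntegrable f volume 0 δ :=
    ((intervalIntegral.intervalIntegrable_rpow' (by linarith)).mul_const _).congr_uIoo hleft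
  have hf_right : IntervalIntegrable f volume δ 1 :=
    (intervalIntegrable_inv_iff.2 <| .inr <| by
      simp [uIcc_of_le hδ1, hδ]).congr_uIoo hright
  rw [lintegral_Ioo_ofReal zero_le_one (hf_left.trans hf_right)
      fun x hx => mul_nonneg (Real.rpow_nonneg hx.1.le _) (by positivity),
    ← intervalIntegral.integral_add_adjacent_intervals hf_left hf_right,
    ← intervalIntegral.integral_congr_uIoo hleft, ← intervalIntegral.integral_congr_uIoo hright,
    integral_inv_of_pos hδ one_pos, intervalIntegral.integral_mul_const,
    integral_rpow (.inl (by linarith)), sub_add_cancel, Real.zero_rpow hs.ne', sub_zero,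
    div_mul_eq_mul_div, ← Real.rpow_add hδ, add_neg_cancel, Real.rpow_zero]

end RealIntegrals

section PolarCoordinates

lemma polarCoord_symm_eq_circleMap (q : ℝ × ℝ) :
    Complex.polarCoord.symm q = circleMap 0 q.1 q.2 := by
  simp [circleMap, Complex.exp_mul_I]

lemma lintegral_eq_lintegral_circleMap {f : ℂ → ℝ≥0∞} (hf : Measurable f) (c : ℂ) :
    ∫⁻ z, f z =
      ∫⁻ r in Ioi (0 : ℝ), ENNReal.ofReal r * ∫⁻ θ in Ioo (-π) π, f (circleMap c r θ) := by
  have hmeas : Measurable fun q : ℝ × ℝ => f (circleMap c q.1 q.2) := by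
    unfold circleMap; fun_prop
  calc ∫⁻ z, f z = ∫⁻ z, f (c + z) := (lintegral_add_left_eq_self f c).symm
    _ = ∫⁻ q in Ioi (0 : ℝ) ×ˢ Ioo (-π) π,
          ENNReal.ofReal q.1 * f (circleMap c q.1 q.2) := by
      rw [← Complex.lintegral_comp_polarCoord_symm]
      simp_rw [polarCoord_symm_eq_circleMap, smul_eq_mul, circleMap, zero_add]
      rfl
    _ = ∫⁻ r in Ioi (0 : ℝ), ∫⁻ θ in Ioo (-π) π,
          ENNReal.ofReal r * f (circleMap c r θ) := by
      rw [Measure.volume_eq_prod, setLIntegral_prod _ (by fun_prop)]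
    _ = _ := by
      refine lintegral_congr fun r => lintegral_const_mul _ ?_
      exact hmeas.comp measurable_prodMk_left

lemma lintegral_ball_eq_lintegral_circleMap {f : ℂ → ℝ≥0∞} {c : ℂ} {R : ℝ}
    (hf : Measurable ((ball c R).indicator f)) :
    ∫⁻ z in ball c R, f z =
      ∫⁻ r in Ioo 0 R, ENNReal.ofReal r * ∫⁻ θ in Ioo (-π) π, f (circleMap c r θ) := by
  have hcircle : ∀ r ∈ Ioi (0 : ℝ), (ENNReal.ofReal r *
      ∫⁻ θ in Ioo (-π) π, (ball c R).indicator f (circleMap c r θ)) =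
        (Iio R).indicator
          (fun r => ENNReal.ofReal r * ∫⁻ θ in Ioo (-π) π, f (circleMap c r θ)) r := by
    intro r hr
    have hmem (θ : ℝ) : circleMap c r θ ∈ ball c R ↔ r < R := by
      simp [abs_of_pos (mem_Ioi.1 hr), dist_eq_norm, circleMap_sub_center]
    by_cases hrR : r < R <;> simp [indicator, hmem, hrR]
  rw [← lintegral_indicator measurableSet_ball, lintegral_eq_lintegral_circleMap hf c,
    setLIntegral_congr_fun measurableSet_Ioi hcircle, setLIntegral_indicator measurableSet_Iio,
    inter_comm, Ioi_inter_Iio]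

end PolarCoordinates

section SubmeanValue

lemma lintegral_enorm_rpow_le {α E : Type*} [MeasurableSpace α] [NormedAddCommGroup E]
    {ν : Measure α} {g : α → E} {p : ℝ} (hp : 1 ≤ p) (hg : AEStronglyMeasurable g ν) :
    (∫⁻ x, ‖g x‖ₑ ∂ν) ^ p ≤ ν univ ^ (p - 1) * ∫⁻ x, ‖g x‖ₑ ^ p ∂ν := by
  have hp0 : 0 < p := one_pos.trans_le hp
  have h := eLpNorm'_le_eLpNorm'_mul_rpow_measure_univ one_pos hp hg
  simp only [eLpNorm', ENNReal.rpow_one, div_one] at h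
  calc _ ≤ _ := ENNReal.rpow_le_rpow h hp0.le
    _ = _ := by
      rw [ENNReal.mul_rpow_of_nonneg _ _ hp0.le, ← ENNReal.rpow_mul, ← ENNReal.rpow_mul,
        one_div_mul_cancel hp0.ne', ENNReal.rpow_one, sub_mul, one_div_mul_cancel hp0.ne',
        one_mul, mul_comm]

variable {E : Type*} [NormedAddCommGroup E] [NormedSpace ℂ E] [CompleteSpace E]
  {h : ℂ → E} {a : ℂ} {r R p : ℝ}

lemma integral_circleMap_eq (hr : 0 < r) (hh : DiffContOnCl ℂ h (ball a r)) :
    ∫ θ in Ioo (-π) π, h (circleMap a r θ) = (2 * π) • h a := by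
  rw [← abs_of_pos hr] at hh
  rw [← hh.circleAverage, Real.circleAverage_eq_integral_add (-π), smul_inv_smul₀ (by positivity),
    intervalIntegral.integral_comp_add_right fun θ => h (circleMap a r θ),
    intervalIntegral.integral_of_le (by linarith [Real.pi_pos]), integral_Ioc_eq_integral_Ioo]
  ring_nf

lemma enorm_rpow_le_lintegral_circleMap (hp : 1 ≤ p) (hr : 0 < r)
    (hh : DiffContOnCl ℂ h (ball a r)) :
    ENNReal.ofReal (2 * π) * ‖h a‖ₑ ^ p ≤ ∫⁻ θ in Ioo (-π) π, ‖h (circleMap a r θ)‖ₑ ^ p := by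
  set L : ℝ≥0∞ := ENNReal.ofReal (2 * π) with hL
  have hL0 : L ≠ 0 := by simp [hL, Real.pi_pos]
  have hLtop : L ≠ ∞ := ENNReal.ofReal_ne_top
  have hvol : volume.restrict (Ioo (-π) π) univ = L := by simp [hL, two_mul]
  have hcont : Continuous fun θ => h (circleMap a r θ) :=
    hh.continuousOn.comp_continuous (continuous_circleMap a r) fun θ => by
      rw [closure_ball a hr.ne']; exact circleMap_mem_closedBall a hr.le θ
  have hmean : L * ‖h a‖ₑ ≤ ∫⁻ θ in Ioo (-π) π, ‖h (circleMap a r θ)‖ₑ := by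
    calc L * ‖h a‖ₑ = ‖(2 * π) • h a‖ₑ := by
          rw [enorm_smul, Real.enorm_of_nonneg Real.two_pi_pos.le]
      _ ≤ _ := integral_circleMap_eq hr hh ▸ enorm_integral_le_lintegral_enorm _
  have hpow : L ^ p = L ^ (p - 1) * L := by
    rw [ENNReal.rpow_sub _ _ hL0 hLtop, ENNReal.rpow_one, ENNReal.div_mul_cancel hL0 hLtop]
  refine (ENNReal.mul_le_mul_iff_right (a := L ^ (p - 1)) (by simp [hL0, hLtop])
    (by simp [hL0, hLtop])).1 ?_
  calc L ^ (p - 1) * (L * ‖h a‖ₑ ^ p) = (L * ‖h a‖ₑ) ^ p := by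
        rw [ENNReal.mul_rpow_of_nonneg _ _ (one_pos.trans_le hp).le, hpow, mul_assoc]
    _ ≤ (∫⁻ θ in Ioo (-π) π, ‖h (circleMap a r θ)‖ₑ) ^ p := by gcongr
    _ ≤ L ^ (p - 1) * ∫⁻ θ in Ioo (-π) π, ‖h (circleMap a r θ)‖ₑ ^ p := by
        rw [← hvol]
        exact lintegral_enorm_rpow_le hp hcont.aestronglyMeasurable

lemma enorm_rpow_le_lintegral_ball (hp : 1 ≤ p) (hR : 0 ≤ R)
    (hh : DifferentiableOn ℂ h (ball a R)) :
    ENNReal.ofReal (π * R ^ 2) * ‖h a‖ₑ ^ p ≤ ∫⁻ z in ball a R, ‖h z‖ₑ ^ p := by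
  have hmeas : Measurable ((ball a R).indicator fun z => ‖h z‖ₑ ^ p) := by
    classical
    rw [← piecewise_eq_indicator]
    exact (ENNReal.continuous_rpow_const.comp_continuousOn
      hh.continuousOn.enorm).measurable_piecewise continuousOn_const measurableSet_ball
  have hradial : ENNReal.ofReal (π * R ^ 2) =
      ∫⁻ r in Ioo 0 R, ENNReal.ofReal r * ENNReal.ofReal (2 * π) := by
    rw [lintegral_mul_const _ (by fun_prop),
      lintegral_Ioo_ofReal hR intervalIntegral.intervalIntegrable_id fun r hr => hr.1.le,
      integral_id, zero_pow two_ne_zero, sub_zero,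
      ← ENNReal.ofReal_mul (by positivity)]
    ring_nf
  rw [lintegral_ball_eq_lintegral_circleMap hmeas, hradial,
    ← lintegral_mul_const _ (by fun_prop)]
  refine setLIntegral_mono' measurableSet_Ioo fun r hr => ?_
  rw [mul_assoc]
  gcongr
  exact enorm_rpow_le_lintegral_circleMap hp hr.1
    ((hh.mono (closedBall_subset_ball hr.2)).diffContOnCl_ball subset_rfl)

end SubmeanValue

section ForelliRudin

lemma sub_add_abs_le_norm_one_sub_circleMap {ρ θ : ℝ} (hρ : 0 ≤ ρ) (hρ1 : ρ ≤ 1) (hθ : |θ| ≤ π) :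
    1 - ρ + |θ| ≤ (1 + π) * ‖1 - circleMap 0 ρ θ‖ := by
  have hradial : 1 - ρ ≤ ‖1 - circleMap 0 ρ θ‖ := by
    simpa [abs_of_nonneg hρ] using norm_sub_norm_le 1 (circleMap 0 ρ θ)
  have hproj : ‖circleMap 0 ρ θ - circleMap 0 1 θ‖ = 1 - ρ := by
    have : circleMap 0 ρ θ - circleMap 0 1 θ = circleMap 0 (ρ - 1) θ := by
      simp [circleMap, sub_mul]
    rw [this, norm_circleMap_zero, abs_sub_comm, abs_of_nonneg (sub_nonneg.2 hρ1)]
  have hchord : 2 / π * |θ| ≤ ‖1 - circleMap 0 1 θ‖ := by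
    have hsin := Real.mul_abs_le_abs_sin (x := θ / 2) (by rw [abs_div, abs_two]; linarith)
    have hexp : circleMap 0 1 θ = Complex.exp (Complex.I * θ) := by
      simp [circleMap, mul_comm]
    rw [abs_div, abs_two] at hsin
    rw [norm_sub_rev, hexp, Complex.norm_exp_I_mul_ofReal_sub_one, norm_mul, Real.norm_two,
      Real.norm_eq_abs]
    linarith
  have hangle : |θ| ≤ π * ‖1 - circleMap 0 ρ θ‖ := by
    have htri := norm_sub_le_norm_sub_add_norm_sub 1 (circleMap 0 ρ θ) (circleMap 0 1 θ)
    have : 2 / π * |θ| ≤ 2 * ‖1 - circleMap 0 ρ θ‖ := by linarith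
    rw [div_mul_eq_mul_div, div_le_iff₀ Real.pi_pos] at this
    linarith
  linarith

lemma lintegral_norm_one_sub_circleMap_rpow_neg_le {p ρ : ℝ} (hp : 1 < p) (hρ : 0 ≤ ρ)
    (hρ1 : ρ < 1) :
    ∫⁻ θ in Ioo (-π) π, ENNReal.ofReal (‖1 - circleMap 0 ρ θ‖ ^ (-p)) ≤
      ENNReal.ofReal ((1 + π) ^ p * (2 * (1 - ρ) ^ (1 - p) / (p - 1))) := by
  have hρ0 : 0 < 1 - ρ := sub_pos.2 hρ1
  have hpi : 0 < 1 + π := by positivity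
  have hpt : ∀ θ ∈ Ioo (-π) π, ‖1 - circleMap 0 ρ θ‖ ^ (-p) ≤
      (1 + π) ^ p * (1 - ρ + |θ|) ^ (-p) := fun θ hθ => by
    have h := sub_add_abs_le_norm_one_sub_circleMap hρ hρ1.le (abs_le.2 ⟨hθ.1.le, hθ.2.le⟩)
    calc ‖1 - circleMap 0 ρ θ‖ ^ (-p) ≤ ((1 - ρ + |θ|) / (1 + π)) ^ (-p) :=
          Real.rpow_le_rpow_of_nonpos (by positivity) ((div_le_iff₀' hpi).2 h) (by linarith)
      _ = _ := by
          rw [Real.div_rpow (by positivity) hpi.le, Real.rpow_neg hpi.le, div_inv_eq_mul, mul_comm]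
  calc _ ≤ ∫⁻ θ in Ioo (-π) π, ENNReal.ofReal ((1 + π) ^ p * (1 - ρ + |θ|) ^ (-p)) :=
        setLIntegral_mono' measurableSet_Ioo fun θ hθ => ENNReal.ofReal_le_ofReal (hpt θ hθ)
    _ ≤ ∫⁻ θ : ℝ, ENNReal.ofReal ((1 + π) ^ p * (1 - ρ + |θ|) ^ (-p)) :=
        setLIntegral_le_lintegral _ _
    _ = _ := by
        have hpos : 0 ≤ (1 + π) ^ p := by positivity
        simp_rw [ENNReal.ofReal_mul hpos]
        rw [lintegral_const_mul _ (by fun_prop), lintegral_add_abs_rpow_neg hρ0 hp]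

lemma lintegral_one_sub_sq_rpow_mul_le {p b : ℝ} (hp : 1 < p) (hb : 0 ≤ b) (hb1 : b < 1) :
    ∫⁻ r in Ioo 0 1, ENNReal.ofReal ((1 - r ^ 2) ^ (p - 2) * (1 - b * r) ^ (1 - p)) ≤
      ENNReal.ofReal (2 ^ p * (1 / (p - 1) + Real.log (1 / (1 - b)))) := by
  have hδ : 0 < 1 - b := sub_pos.2 hb1
  set g : ℝ → ℝ≥0∞ := fun x => ENNReal.ofReal (x ^ (p - 1 - 1) * max x (1 - b) ^ (-(p - 1)))
  have hpt : ∀ r ∈ Ioo (0 : ℝ) 1, ENNReal.ofReal ((1 - r ^ 2) ^ (p - 2) * (1 - b * r) ^ (1 - p)) ≤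
      ENNReal.ofReal (2 ^ p) * g (1 - r) := fun r hr => by
    have hr1 : 0 < 1 - r := sub_pos.2 hr.2
    have hweight : (1 - r ^ 2) ^ (p - 2) ≤ 2 ^ p * (1 - r) ^ (p - 2) := by
      rw [show 1 - r ^ 2 = (1 + r) * (1 - r) by ring, Real.mul_rpow (by linarith [hr.1]) hr1.le]
      gcongr
      calc (1 + r) ^ (p - 2) ≤ (1 + r) ^ p :=
            Real.rpow_le_rpow_of_exponent_le (by linarith [hr.1]) (by linarith)
        _ ≤ 2 ^ p := Real.rpow_le_rpow (by linarith [hr.1]) (by linarith [hr.2]) (by linarith)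
    have hmax : (1 - b * r) ^ (1 - p) ≤ max (1 - r) (1 - b) ^ (1 - p) := by
      refine Real.rpow_le_rpow_of_nonpos (hδ.trans_le (le_max_right _ _)) ?_ (by linarith)
      exact max_le (by nlinarith [hr.1]) (by nlinarith [hr.2])
    rw [← ENNReal.ofReal_mul (by positivity)]
    refine ENNReal.ofReal_le_ofReal ?_
    rw [← mul_assoc, show p - 1 - 1 = p - 2 by ring, neg_sub]
    exact mul_le_mul hweight hmax (Real.rpow_nonneg (by nlinarith [hr.2]) _) (by positivity)
  have hreflect : ∫⁻ r in Ioo 0 1, g (1 - r) = ∫⁻ x in Ioo 0 1, g x := by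
    simpa using (Measure.measurePreserving_sub_left volume (1 : ℝ)).setLIntegral_comp_preimage_emb
      (MeasurableEquiv.subLeft (1 : ℝ)).measurableEmbedding g (Ioo 0 1)
  calc _ ≤ ∫⁻ r in Ioo 0 1, ENNReal.ofReal (2 ^ p) * g (1 - r) :=
        setLIntegral_mono' measurableSet_Ioo hpt
    _ = _ := by
        rw [lintegral_const_mul _ (by fun_prop), hreflect,
          lintegral_rpow_mul_max_rpow (sub_pos.2 hp) hδ (by linarith),
          ← ENNReal.ofReal_mul (by positivity)]

lemma lintegral_ball_one_sub_norm_sq_rpow_mul_le {p b : ℝ} (hp : 1 < p) (hb : 0 ≤ b)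
    (hb1 : b < 1) :
    ∫⁻ z in ball (0 : ℂ) 1, ENNReal.ofReal ((1 - ‖z‖ ^ 2) ^ (p - 2) * ‖1 - b * z‖ ^ (-p)) ≤
      ENNReal.ofReal ((1 + π) ^ p * (2 / (p - 1)) *
        (2 ^ p * (1 / (p - 1) + Real.log (1 / (1 - b))))) := by
  have : 0 < p - 1 := sub_pos.2 hp
  set C : ℝ := (1 + π) ^ p * (2 / (p - 1))
  have hC : 0 ≤ C := by positivity
  have hcircle : ∀ r ∈ Ioo (0 : ℝ) 1, ENNReal.ofReal r * ∫⁻ θ in Ioo (-π) π,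
      ENNReal.ofReal ((1 - ‖circleMap 0 r θ‖ ^ 2) ^ (p - 2) *
        ‖1 - b * circleMap 0 r θ‖ ^ (-p)) ≤
      ENNReal.ofReal C * ENNReal.ofReal ((1 - r ^ 2) ^ (p - 2) * (1 - b * r) ^ (1 - p)) := by
    intro r hr
    have hw : 0 ≤ (1 - r ^ 2) ^ (p - 2) := Real.rpow_nonneg (by nlinarith [hr.1, hr.2]) _
    have hscale (θ : ℝ) : b * circleMap 0 r θ = circleMap 0 (b * r) θ := by
      simp [circleMap, mul_assoc]
    simp_rw [hscale, norm_circleMap_zero, sq_abs, ENNReal.ofReal_mul hw]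
    rw [lintegral_const_mul' _ _ ENNReal.ofReal_ne_top]
    calc _ ≤ 1 * (ENNReal.ofReal ((1 - r ^ 2) ^ (p - 2)) *
          ENNReal.ofReal ((1 + π) ^ p * (2 * (1 - b * r) ^ (1 - p) / (p - 1)))) := by
          gcongr
          · exact ENNReal.ofReal_le_one.2 hr.2.le
          · exact lintegral_norm_one_sub_circleMap_rpow_neg_le hp (mul_nonneg hb hr.1.le)
              (by nlinarith [hr.2])
      _ = _ := by
          rw [one_mul, ← ENNReal.ofReal_mul hw, ← ENNReal.ofReal_mul hw, ← ENNReal.ofReal_mul hC]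
          simp only [C]
          ring_nf
  rw [lintegral_ball_eq_lintegral_circleMap
    (Measurable.indicator (by fun_prop) measurableSet_ball)]
  calc _ ≤ ∫⁻ r in Ioo 0 1, ENNReal.ofReal C *
          ENNReal.ofReal ((1 - r ^ 2) ^ (p - 2) * (1 - b * r) ^ (1 - p)) :=
        setLIntegral_mono' measurableSet_Ioo hcircle
    _ ≤ _ := by
        rw [lintegral_const_mul' _ _ ENNReal.ofReal_ne_top, ENNReal.ofReal_mul hC]
        gcongr
        exact lintegral_one_sub_sq_rpow_mul_le hp hb hb1

end ForelliRudin

section BesovSubsetBloch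

/-- The density of `ρ_p(f)^p` with respect to area, so that `MemBesov` asks for its integrability
over the disc. -/
def besovDensity (p : ℝ) (f : ℂ → ℂ) (z : ℂ) : ℝ :=
  (1 - ‖z‖ ^ 2) ^ (p - 2) * ‖deriv f z‖ ^ p

/-- The seminorm `ρ_p` of the Besov space `B^p`, normalized by `1/π` as in `besovNorm`. -/
def besovSeminorm (p : ℝ) (f : ℂ → ℂ) : ℝ :=
  (π⁻¹ * ∫ z in ball (0 : ℂ) 1, besovDensity p f z) ^ (1 / p)

lemma one_sub_norm_sq_pos {z : ℂ} (hz : z ∈ ball (0 : ℂ) 1) : 0 < 1 - ‖z‖ ^ 2 := by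
  rw [mem_ball_zero_iff] at hz
  nlinarith [norm_nonneg z]

lemma besovDensity_nonneg (p : ℝ) (f : ℂ → ℂ) {z : ℂ} (hz : z ∈ ball (0 : ℂ) 1) :
    0 ≤ besovDensity p f z :=
  mul_nonneg (Real.rpow_nonneg (one_sub_norm_sq_pos hz).le _) (by positivity)

lemma inv_pi_mul_integral_besovDensity_nonneg (p : ℝ) (f : ℂ → ℂ) :
    0 ≤ π⁻¹ * ∫ z in ball (0 : ℂ) 1, besovDensity p f z :=
  mul_nonneg (by positivity)
    (setIntegral_nonneg measurableSet_ball fun _ hz => besovDensity_nonneg p f hz)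

lemma besovSeminorm_nonneg (p : ℝ) (f : ℂ → ℂ) : 0 ≤ besovSeminorm p f :=
  Real.rpow_nonneg (inv_pi_mul_integral_besovDensity_nonneg p f) _

lemma MemBesov.lintegral_besovDensity {p : ℝ} {f : ℂ → ℂ} (hp : p ≠ 0) (hf : MemBesov p f) :
    ∫⁻ z in ball (0 : ℂ) 1, ENNReal.ofReal (besovDensity p f z) =
      ENNReal.ofReal (π * besovSeminorm p f ^ p) := by
  rw [besovSeminorm, one_div, Real.rpow_inv_rpow (inv_pi_mul_integral_besovDensity_nonneg p f) hp,
    mul_inv_cancel_left₀ Real.pi_ne_zero,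
    ofReal_integral_eq_lintegral_ofReal (f := besovDensity p f) hf.2]
  exact ae_restrict_of_forall_mem measurableSet_ball fun z hz => besovDensity_nonneg p f hz

lemma memBesov_of_lintegral_ne_top {p : ℝ} {f : ℂ → ℂ} (hf : DifferentiableOn ℂ f (ball 0 1))
    (hint : ∫⁻ z in ball (0 : ℂ) 1, ENNReal.ofReal (besovDensity p f z) ≠ ∞) : MemBesov p f := by
  have hmeas : Measurable (besovDensity p f) := by
    have := measurable_deriv f
    unfold besovDensity
    fun_prop
  refine ⟨hf, hmeas.aestronglyMeasurable, ?_⟩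
  exact (hasFiniteIntegral_iff_ofReal <| ae_restrict_of_forall_mem measurableSet_ball
    fun z hz => besovDensity_nonneg p f hz).2 hint.lt_top

lemma rpow_le_rpow_abs_mul_rpow {x y c : ℝ} (q : ℝ) (hx : 0 < x) (hy : 0 < y) (hc : 0 ≤ c)
    (hxy : x ≤ c * y) (hyx : y ≤ c * x) : x ^ q ≤ c ^ |q| * y ^ q := by
  rcases le_total 0 q with hq | hq
  · rw [abs_of_nonneg hq, ← Real.mul_rpow hc hy.le]
    exact Real.rpow_le_rpow hx.le hxy hq
  · have hc0 : 0 < c := pos_of_mul_pos_left (hx.trans_le hxy) hy.le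
    rw [abs_of_nonpos hq, Real.rpow_neg hc, ← Real.inv_rpow hc,
      ← Real.mul_rpow (by positivity) hy.le]
    exact Real.rpow_le_rpow_of_nonpos (by positivity) ((inv_mul_le_iff₀ hc0).2 hyx) hq

lemma one_sub_norm_sq_comparable {a z : ℂ} (ha : a ∈ ball (0 : ℂ) 1)
    (hz : z ∈ ball a ((1 - ‖a‖ ^ 2) / 4)) :
    1 - ‖a‖ ^ 2 ≤ 4 * (1 - ‖z‖ ^ 2) ∧ 1 - ‖z‖ ^ 2 ≤ 4 * (1 - ‖a‖ ^ 2) := by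
  rw [mem_ball_zero_iff] at ha
  have hdist : |‖z‖ - ‖a‖| < (1 - ‖a‖ ^ 2) / 4 :=
    (abs_norm_sub_norm_le z a).trans_lt (mem_ball_iff_norm.1 hz)
  obtain ⟨hlower, hupper⟩ := abs_lt.1 hdist
  constructor <;> nlinarith [norm_nonneg z, norm_nonneg a]

lemma mul_enorm_deriv_rpow_le_lintegral_besovDensity {p : ℝ} {f : ℂ → ℂ} {a : ℂ} (hp : 1 ≤ p)
    (hf : DifferentiableOn ℂ f (ball 0 1)) (ha : a ∈ ball (0 : ℂ) 1) :
    ENNReal.ofReal ((1 - ‖a‖ ^ 2) ^ (p - 2)) *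
        (ENNReal.ofReal (π * ((1 - ‖a‖ ^ 2) / 4) ^ 2) * ‖deriv f a‖ₑ ^ p) ≤
      ENNReal.ofReal (4 ^ |p - 2|) * ∫⁻ z in ball (0 : ℂ) 1,
        ENNReal.ofReal (besovDensity p f z) := by
  set D : ℝ := 1 - ‖a‖ ^ 2
  have hD : 0 < D := one_sub_norm_sq_pos ha
  have hsub : ball a (D / 4) ⊆ ball 0 1 := fun z hz => by
    have := (one_sub_norm_sq_comparable ha hz).1
    rw [mem_ball_zero_iff]
    nlinarith [norm_nonneg z]
  have hweight : ∀ z ∈ ball a (D / 4), ENNReal.ofReal (D ^ (p - 2)) * ‖deriv f z‖ₑ ^ p ≤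
      ENNReal.ofReal (4 ^ |p - 2|) * ENNReal.ofReal (besovDensity p f z) := fun z hz => by
    obtain ⟨hlower, hupper⟩ := one_sub_norm_sq_comparable ha hz
    rw [← ofReal_norm, ENNReal.ofReal_rpow_of_nonneg (norm_nonneg _) (by linarith),
      ← ENNReal.ofReal_mul (by positivity), ← ENNReal.ofReal_mul (by positivity), besovDensity,
      ← mul_assoc]
    gcongr
    exact rpow_le_rpow_abs_mul_rpow _ hD (one_sub_norm_sq_pos (hsub hz)) (by norm_num)
      hlower hupper
  calc _ ≤ ENNReal.ofReal (D ^ (p - 2)) * ∫⁻ z in ball a (D / 4), ‖deriv f z‖ₑ ^ p := by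
        gcongr
        exact enorm_rpow_le_lintegral_ball hp (by positivity)
          ((hf.deriv isOpen_ball).mono hsub)
    _ ≤ ∫⁻ z in ball a (D / 4), ENNReal.ofReal (4 ^ |p - 2|) *
          ENNReal.ofReal (besovDensity p f z) := by
        rw [← lintegral_const_mul' _ _ ENNReal.ofReal_ne_top]
        exact setLIntegral_mono' measurableSet_ball hweight
    _ ≤ _ := by
        rw [lintegral_const_mul' _ _ ENNReal.ofReal_ne_top]
        gcongr

lemma MemBesov.mul_norm_deriv_le {p : ℝ} {f : ℂ → ℂ} {a : ℂ} (hp : 1 ≤ p)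
    (hf : MemBesov p f) (ha : a ∈ ball (0 : ℂ) 1) :
    (1 - ‖a‖ ^ 2) * ‖deriv f a‖ ≤ (4 ^ (|p - 2| + 2)) ^ (1 / p) * besovSeminorm p f := by
  have hp0 : 0 < p := one_pos.trans_le hp
  have hD := one_sub_norm_sq_pos ha
  have hρ := besovSeminorm_nonneg p f
  have hlocal := mul_enorm_deriv_rpow_le_lintegral_besovDensity hp hf.1 ha
  rw [hf.lintegral_besovDensity hp0.ne', ← ofReal_norm,
    ENNReal.ofReal_rpow_of_nonneg (norm_nonneg _) hp0.le,
    ← ENNReal.ofReal_mul (by positivity), ← ENNReal.ofReal_mul (by positivity),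
    ← ENNReal.ofReal_mul (by positivity), ENNReal.ofReal_le_ofReal_iff (by positivity)] at hlocal
  have hpow : ((1 - ‖a‖ ^ 2) * ‖deriv f a‖) ^ p ≤ 4 ^ (|p - 2| + 2) * besovSeminorm p f ^ p := by
    have hD_pow : (1 - ‖a‖ ^ 2) ^ p = (1 - ‖a‖ ^ 2) ^ (p - 2) * (1 - ‖a‖ ^ 2) ^ 2 := by
      rw [← Real.rpow_add_natCast hD.ne']
      norm_num
    have hfour : (4 : ℝ) ^ (|p - 2| + 2) = 4 ^ |p - 2| * 16 := by
      rw [Real.rpow_add (by norm_num)]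
      norm_num
    rw [Real.mul_rpow hD.le (norm_nonneg _), hD_pow, hfour]
    refine le_of_mul_le_mul_left ?_ (by positivity : 0 < π / 16)
    linarith
  rw [← Real.rpow_le_rpow_iff (by positivity) (by positivity) hp0,
    Real.mul_rpow (by positivity) hρ, one_div, Real.rpow_inv_rpow (by positivity) hp0.ne']
  exact hpow

lemma MemBesov.memBloch {p : ℝ} {f : ℂ → ℂ} (hp : 1 ≤ p) (hf : MemBesov p f) : MemBloch f :=
  ⟨hf.1, _, fun _ hz => hf.mul_norm_deriv_le hp hz⟩

lemma MemBesov.blochNorm_le {p : ℝ} {f : ℂ → ℂ} (hp : 1 ≤ p) (hf : MemBesov p f) :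
    blochNorm f ≤ (4 ^ (|p - 2| + 2)) ^ (1 / p) * besovNorm p f := by
  set c : ℝ := (4 ^ (|p - 2| + 2)) ^ (1 / p)
  have hc : 1 ≤ c := Real.one_le_rpow (Real.one_le_rpow (by norm_num) (by positivity))
    (by positivity)
  have hsup : sSup {x : ℝ | ∃ z ∈ ball (0 : ℂ) 1, x = (1 - ‖z‖ ^ 2) * ‖deriv f z‖} ≤
      c * besovSeminorm p f := by
    refine Real.sSup_le ?_ (mul_nonneg (by positivity) (besovSeminorm_nonneg p f))
    rintro _ ⟨z, hz, rfl⟩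
    exact hf.mul_norm_deriv_le hp hz
  calc blochNorm f ≤ ‖f 0‖ + c * besovSeminorm p f := by unfold blochNorm; gcongr
    _ ≤ c * ‖f 0‖ + c * besovSeminorm p f := by
        gcongr; exact le_mul_of_one_le_left (norm_nonneg _) hc
    _ = c * besovNorm p f := (mul_add _ _ _).symm

end BesovSubsetBloch

section LogTest

/-- The test functions `log (2 / (1 - b z))` of the argument: the norm of `logTest b` in `B^p` is at
most of order `log (2 / (1 - b)) ^ (1 / p)`, but its value at `b` is of order `log (2 / (1 - b))`.
The constant `log 2` keeps this value bounded below for `b` near `0`. -/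
def logTest (b : ℝ) (z : ℂ) : ℂ := Real.log 2 - Complex.log (1 - b * z)

variable {b : ℝ}

lemma norm_ofReal_mul_lt_one (hb : b ∈ Ico (0 : ℝ) 1) {z : ℂ} (hz : z ∈ ball (0 : ℂ) 1) :
    ‖b * z‖ < 1 := by
  rw [mem_ball_zero_iff] at hz
  rw [norm_mul, Complex.norm_of_nonneg hb.1]
  exact mul_lt_one_of_nonneg_of_lt_one_left hb.1 hb.2 hz.le

lemma hasDerivAt_logTest (hb : b ∈ Ico (0 : ℝ) 1) {z : ℂ} (hz : z ∈ ball (0 : ℂ) 1) :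
    HasDerivAt (logTest b) (b / (1 - b * z)) z := by
  have hslit : 1 - b * z ∈ Complex.slitPlane := by
    simpa [sub_eq_add_neg] using Complex.mem_slitPlane_of_norm_lt_one
      ((norm_neg (b * z)).trans_lt (norm_ofReal_mul_lt_one hb hz))
  have haffine : HasDerivAt (fun w : ℂ => 1 - b * w) (-b) z := by
    simpa using ((hasDerivAt_id z).const_mul (b : ℂ)).const_sub 1
  have h := (haffine.clog hslit).const_sub (Real.log 2 : ℂ)
  rw [neg_div, neg_neg] at h
  exact h

lemma logTest_zero (b : ℝ) : logTest b 0 = Real.log 2 := by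
  simp [logTest]

lemma lintegral_besovDensity_logTest_le {p : ℝ} (hp : 1 < p) (hb : b ∈ Ico (0 : ℝ) 1) :
    ∫⁻ z in ball (0 : ℂ) 1, ENNReal.ofReal (besovDensity p (logTest b) z) ≤
      ENNReal.ofReal ((1 + π) ^ p * (2 / (p - 1)) *
        (2 ^ p * (1 / (p - 1) + Real.log (1 / (1 - b))))) := by
  refine (setLIntegral_mono' measurableSet_ball fun z hz => ENNReal.ofReal_le_ofReal ?_).trans
    (lintegral_ball_one_sub_norm_sq_rpow_mul_le hp hb.1 hb.2)
  have hD := one_sub_norm_sq_pos hz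
  rw [besovDensity, (hasDerivAt_logTest hb hz).deriv, norm_div, Complex.norm_of_nonneg hb.1,
    Real.rpow_neg (norm_nonneg _), ← Real.inv_rpow (norm_nonneg _), div_eq_mul_inv]
  have : 0 ≤ p := by linarith
  have hb0 := hb.1
  gcongr
  exact mul_le_of_le_one_left (by positivity) hb.2.le

lemma memBesov_logTest {p : ℝ} (hp : 1 < p) (hb : b ∈ Ico (0 : ℝ) 1) : MemBesov p (logTest b) :=
  memBesov_of_lintegral_ne_top
    (fun _ hz => (hasDerivAt_logTest hb hz).differentiableAt.differentiableWithinAt)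
    ((lintegral_besovDensity_logTest_le hp hb).trans_lt ENNReal.ofReal_lt_top).ne

lemma log_two_le_log (hb : b ∈ Ico (0 : ℝ) 1) : Real.log 2 ≤ Real.log (2 / (1 - b)) :=
  Real.log_le_log two_pos (le_div_self two_pos.le (sub_pos.2 hb.2) (by linarith [hb.1]))

lemma exists_besovSeminorm_logTest_rpow_le {p : ℝ} (hp : 1 < p) :
    ∃ K > 0, ∀ b ∈ Ico (0 : ℝ) 1,
      besovSeminorm p (logTest b) ^ p ≤ K * Real.log (2 / (1 - b)) := by
  have hp1 : 0 < p - 1 := sub_pos.2 hp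
  have hlog2 : 0 < Real.log 2 := Real.log_pos one_lt_two
  set A : ℝ := (1 + π) ^ p * (2 / (p - 1)) * 2 ^ p / π
  have : 0 < A := by positivity
  refine ⟨A * (1 / (p - 1) / Real.log 2 + 1), by positivity, fun b hb => ?_⟩
  have hδ : 0 < 1 - b := sub_pos.2 hb.2
  have hL := log_two_le_log hb
  have hlog : Real.log (1 / (1 - b)) ≤ Real.log (2 / (1 - b)) := by gcongr; exact one_le_two
  have hlog0 : 0 ≤ Real.log (1 / (1 - b)) :=
    Real.log_nonneg ((one_le_div hδ).2 (by linarith [hb.1]))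
  have hbound := lintegral_besovDensity_logTest_le hp hb
  rw [(memBesov_logTest hp hb).lintegral_besovDensity (by positivity),
    ENNReal.ofReal_le_ofReal_iff (by positivity)] at hbound
  calc besovSeminorm p (logTest b) ^ p ≤ A * (1 / (p - 1) + Real.log (1 / (1 - b))) := by
        rw [← mul_le_mul_iff_right₀ Real.pi_pos]
        refine hbound.trans_eq ?_
        simp only [A]
        field_simp
    _ ≤ A * (1 / (p - 1) / Real.log 2 * Real.log (2 / (1 - b)) + Real.log (2 / (1 - b))) := by
        gcongr
        rw [div_mul_eq_mul_div, le_div_iff₀ hlog2]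
        gcongr
    _ = _ := by ring

lemma exists_besovNorm_logTest_le {p : ℝ} (hp : 1 < p) :
    ∃ K > 0, ∀ b ∈ Ico (0 : ℝ) 1,
      besovNorm p (logTest b) ≤ K * Real.log (2 / (1 - b)) ^ (1 / p) := by
  obtain ⟨K, hK, hseminorm⟩ := exists_besovSeminorm_logTest_rpow_le hp
  have hp0 : 0 < p := by positivity
  have hlog2 : 0 < Real.log 2 := Real.log_pos one_lt_two
  refine ⟨1 + K ^ (1 / p), by positivity, fun b hb => ?_⟩
  have hL := log_two_le_log hb
  have hL0 : 0 ≤ Real.log (2 / (1 - b)) := hlog2.le.trans hL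
  have hvalue : ‖logTest b 0‖ ≤ Real.log (2 / (1 - b)) ^ (1 / p) := by
    rw [logTest_zero, Complex.norm_of_nonneg hlog2.le]
    calc Real.log 2 = Real.log 2 ^ (1 : ℝ) := (Real.rpow_one _).symm
      _ ≤ Real.log 2 ^ (1 / p) := Real.rpow_le_rpow_of_exponent_ge hlog2
          (by linarith [Real.log_two_lt_d9]) ((div_le_one hp0).2 hp.le)
      _ ≤ _ := by gcongr
  have hseminorm_le : besovSeminorm p (logTest b) ≤
      K ^ (1 / p) * Real.log (2 / (1 - b)) ^ (1 / p) := by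
    rw [← Real.mul_rpow hK.le hL0, one_div,
      Real.le_rpow_inv_iff_of_pos (besovSeminorm_nonneg _ _) (by positivity) hp0]
    exact hseminorm b hb
  calc besovNorm p (logTest b) = ‖logTest b 0‖ + besovSeminorm p (logTest b) := rfl
    _ ≤ _ := by rw [add_mul, one_mul]; gcongr

lemma tc_eq_of_hasSum {f : ℂ → ℂ} {a : ℕ → ℂ} {r : ℝ} (hr : 0 < r)
    (hf : ∀ z ∈ ball (0 : ℂ) r, HasSum (fun n => a n * z ^ n) (f z)) (n : ℕ) : tc f n = a n := by
  have hseries : HasFPowerSeriesAt f (FormalMultilinearSeries.ofScalars ℂ a) 0 := by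
    rw [hasFPowerSeriesAt_iff]
    filter_upwards [ball_mem_nhds 0 hr] with z hz
    simpa only [zero_add, FormalMultilinearSeries.coeff_ofScalars, smul_eq_mul, mul_comm]
      using hf z hz
  have hcoeff := congrArg (fun q => FormalMultilinearSeries.coeff q n)
    (hseries.analyticAt.hasFPowerSeriesAt.eq_formalMultilinearSeries hseries)
  simpa only [tc, FormalMultilinearSeries.coeff_ofScalars] using hcoeff

lemma tc_logTest (hb : b ∈ Ico (0 : ℝ) 1) (n : ℕ) :
    tc (logTest b) n = (((if n = 0 then Real.log 2 else 0) + b ^ n / n : ℝ) : ℂ) := by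
  refine tc_eq_of_hasSum (a := fun n => (((if n = 0 then Real.log 2 else 0) + b ^ n / n : ℝ) : ℂ))
    one_pos (fun z hz => ?_) n
  have hlog := (hasSum_ite_eq 0 (Real.log 2 : ℂ)).add
    (Complex.hasSum_taylorSeries_neg_log (norm_ofReal_mul_lt_one hb hz))
  rw [← sub_eq_add_neg] at hlog
  refine hlog.congr_fun fun n => ?_
  rcases eq_or_ne n 0 with rfl | hn
  · simp
  · simp only [if_neg hn]
    push_cast
    ring

open scoped ComplexOrder in
lemma tc_logTest_nonneg (hb : b ∈ Ico (0 : ℝ) 1) (n : ℕ) : 0 ≤ tc (logTest b) n := by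
  rw [tc_logTest hb, Complex.zero_le_real]
  have : 0 ≤ Real.log 2 := Real.log_nonneg one_le_two
  have hb0 := hb.1
  split_ifs <;> positivity

lemma logTest_ofReal_self (hb : b ∈ Ico (0 : ℝ) 1) :
    logTest b b = ((Real.log 2 - Real.log (1 - b ^ 2) : ℝ) : ℂ) := by
  rw [logTest, Complex.ofReal_sub, Complex.ofReal_log (x := 1 - b ^ 2) (by nlinarith [hb.1, hb.2])]
  push_cast
  ring_nf

lemma half_log_le_log_sub_log (hb : b ∈ Ico (0 : ℝ) 1) :
    Real.log (2 / (1 - b)) / 2 ≤ Real.log 2 - Real.log (1 - b ^ 2) := by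
  have hδ : 0 < 1 - b := sub_pos.2 hb.2
  have hb0 : 0 < 1 + b := by linarith [hb.1]
  have hsq : 2 * Real.log (1 + b) ≤ Real.log (2 / (1 - b)) := by
    rw [← Real.log_rpow hb0, Real.rpow_two]
    refine Real.log_le_log (by positivity) ((le_div_iff₀ hδ).2 ?_)
    nlinarith [hb.1, hb.2, mul_nonneg hb.1 hb.1]
  rw [show 1 - b ^ 2 = (1 - b) * (1 + b) by ring, Real.log_mul hδ.ne' hb0.ne']
  rw [Real.log_div two_ne_zero hδ.ne'] at hsq ⊢
  linarith

lemma half_log_le_norm_logTest (hb : b ∈ Ico (0 : ℝ) 1) :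
    Real.log (2 / (1 - b)) / 2 ≤ ‖logTest b b‖ := by
  rw [logTest_ofReal_self hb, Complex.norm_real]
  exact (half_log_le_log_sub_log hb).trans (le_abs_self _)

end LogTest

section LowerBound

open scoped ComplexOrder

lemma pow_mul_measure_Ico_le_mom (μ : Measure ℝ) [IsFiniteMeasure μ] {b : ℝ} (hb : 0 ≤ b) (n : ℕ) :
    b ^ n * (μ (Ico b 1)).toReal ≤ mom μ n := by
  have hint : IntegrableOn (fun t : ℝ => t ^ n) (Ico 0 1) μ :=
    ((continuous_pow n).continuousOn.integrableOn_compact isCompact_Icc).mono_set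
      Ico_subset_Icc_self
  have hsub : Ico b 1 ⊆ Ico 0 1 := Ico_subset_Ico_left hb
  calc b ^ n * (μ (Ico b 1)).toReal = ∫ _ in Ico b 1, b ^ n ∂μ := by
        rw [setIntegral_const, smul_eq_mul, mul_comm, measureReal_def]
    _ ≤ ∫ t in Ico b 1, t ^ n ∂μ :=
        setIntegral_mono_on (integrableOn_const (measure_ne_top _ _)) (hint.mono_set hsub)
          measurableSet_Ico fun t ht => pow_le_pow_left₀ hb ht.1 n
    _ ≤ mom μ n := setIntegral_mono_set hint
        (ae_restrict_of_forall_mem measurableSet_Ico fun t ht => pow_nonneg ht.1 n)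
        hsub.eventuallyLE

lemma hasSum_tc {f : ℂ → ℂ} {z : ℂ} (hf : DifferentiableOn ℂ f (ball 0 1))
    (hz : z ∈ ball (0 : ℂ) 1) : HasSum (fun n => tc f n * z ^ n) (f z) := by
  have h := Complex.hasSum_taylorSeries_on_ball hf hz
  simp only [sub_zero, smul_eq_mul] at h
  refine h.congr_fun fun n => ?_
  rw [tc]
  ring

lemma hasSum_nat_mul_deriv_tsum {c : ℕ → ℂ} {R : ℝ}
    (hc : ∀ z ∈ ball (0 : ℂ) R, Summable fun n => ‖c n * z ^ n‖) {z : ℂ} (hz : z ∈ ball (0 : ℂ) R) :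
    HasSum (fun n => n * (c n * z ^ n)) (z * deriv (fun w => ∑' n, c n * w ^ n) z) := by
  rw [mem_ball_zero_iff] at hz
  obtain ⟨r, hzr, hrR⟩ := exists_between hz
  have hr : 0 ≤ r := (norm_nonneg z).trans hzr.le
  have hr_summable := hc r (by rwa [mem_ball_zero_iff, Complex.norm_of_nonneg hr])
  have hderiv := Complex.hasSum_deriv_of_summable_norm (F := fun n w => c n * w ^ n) hr_summable
    (fun n => by fun_prop) isOpen_ball (fun n w hw => by
      rw [norm_mul, norm_mul, norm_pow, norm_pow, Complex.norm_of_nonneg hr]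
      gcongr
      exact (mem_ball_zero_iff.1 hw).le) (mem_ball_zero_iff.2 hzr)
  refine (hderiv.mul_left z).congr_fun fun n => ?_
  rcases n with _ | n
  · simp
  · rw [deriv_const_mul_field, deriv_pow_field, Nat.add_sub_cancel]
    ring

variable {μ : Measure ℝ} [IsFiniteMeasure μ] {f : ℂ → ℂ} {b : ℝ}

lemma ofReal_mem_ball_s4 (hb : b ∈ Ico (0 : ℝ) 1) : (b : ℂ) ∈ ball (0 : ℂ) 1 := by
  rw [mem_ball_zero_iff, Complex.norm_of_nonneg hb.1]
  exact hb.2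

lemma le_hmuCoeff (hf : DifferentiableOn ℂ f (ball 0 1)) (htc : ∀ k, 0 ≤ tc f k)
    (hwd : HmuWD μ f) (hb : b ∈ Ico (0 : ℝ) 1) (n : ℕ) :
    (μ (Ico b 1)).toReal * f b * b ^ n ≤ hmuCoeff μ f n := by
  have hvalue := (hasSum_tc hf (ofReal_mem_ball_s4 hb)).mul_left ((μ (Ico b 1)).toReal * (b : ℂ) ^ n)
  rw [mul_right_comm]
  refine hasSum_le (fun k => ?_) hvalue (hwd.1 n).of_norm.hasSum
  have hmom : ((b ^ (n + k) * (μ (Ico b 1)).toReal : ℝ) : ℂ) ≤ mom μ (n + k) :=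
    Complex.real_le_real.2 (pow_mul_measure_Ico_le_mom μ hb.1 _)
  calc _ = ((b ^ (n + k) * (μ (Ico b 1)).toReal : ℝ) : ℂ) * tc f k := by push_cast; ring
    _ ≤ _ := mul_le_mul_of_nonneg_right hmom (htc k)

lemma le_deriv_Hmu (hf : DifferentiableOn ℂ f (ball 0 1)) (htc : ∀ k, 0 ≤ tc f k)
    (hwd : HmuWD μ f) (hb : b ∈ Ico (0 : ℝ) 1) :
    (μ (Ico b 1)).toReal * f b * (b ^ 2 / (1 - b ^ 2) ^ 2) ≤ b * deriv (Hmu μ f) b := by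
  have hgeom : HasSum (fun n : ℕ => (n : ℂ) * (b ^ 2) ^ n) (b ^ 2 / (1 - b ^ 2) ^ 2) := by
    apply hasSum_coe_mul_geometric_of_norm_lt_one
    rw [norm_pow, Complex.norm_of_nonneg hb.1]
    exact pow_lt_one₀ hb.1 hb.2 two_ne_zero
  refine hasSum_le (fun n => ?_) (hgeom.mul_left ((μ (Ico b 1)).toReal * f b))
    (hasSum_nat_mul_deriv_tsum hwd.2 (ofReal_mem_ball_s4 hb))
  have hb0 : (0 : ℂ) ≤ b := Complex.zero_le_real.2 hb.1
  calc _ = (n : ℂ) * ((μ (Ico b 1)).toReal * f b * b ^ n * b ^ n) := by ring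
    _ ≤ _ := by
      gcongr
      exact le_hmuCoeff hf htc hwd hb n

lemma nonneg_of_tc_nonneg (hf : DifferentiableOn ℂ f (ball 0 1)) (htc : ∀ k, 0 ≤ tc f k)
    (hb : b ∈ Ico (0 : ℝ) 1) : 0 ≤ f b :=
  (hasSum_tc hf (ofReal_mem_ball_s4 hb)).nonneg fun k =>
    mul_nonneg (htc k) (pow_nonneg (Complex.zero_le_real.2 hb.1) k)

lemma measure_mul_norm_le_norm_Hmu_zero (hf : DifferentiableOn ℂ f (ball 0 1))
    (htc : ∀ k, 0 ≤ tc f k) (hwd : HmuWD μ f) (hb : b ∈ Ico (0 : ℝ) 1) :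
    (μ (Ico b 1)).toReal * ‖f b‖ ≤ ‖Hmu μ f 0‖ := by
  have hzero : Hmu μ f 0 = hmuCoeff μ f 0 := by
    rw [Hmu, tsum_eq_single 0 fun n hn => by simp [hn], pow_zero, mul_one]
  have h := le_hmuCoeff hf htc hwd hb 0
  rw [pow_zero, mul_one] at h
  have hnorm := CStarAlgebra.norm_le_norm_of_nonneg_of_le
    (mul_nonneg (Complex.zero_le_real.2 toReal_nonneg) (nonneg_of_tc_nonneg hf htc hb)) h
  rwa [hzero, ← Complex.norm_of_nonneg (toReal_nonneg (a := μ (Ico b 1))), ← norm_mul]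

lemma measure_mul_norm_le_norm_deriv_Hmu (hf : DifferentiableOn ℂ f (ball 0 1))
    (htc : ∀ k, 0 ≤ tc f k) (hwd : HmuWD μ f) (hb : b ∈ Ico (0 : ℝ) 1) :
    (μ (Ico b 1)).toReal * ‖f b‖ * (b / (1 - b ^ 2) ^ 2) ≤ ‖deriv (Hmu μ f) b‖ := by
  rcases hb.1.eq_or_lt with rfl | hb0
  · simp
  have hfactor : (b : ℂ) ^ 2 / (1 - b ^ 2) ^ 2 = ((b ^ 2 / (1 - b ^ 2) ^ 2 : ℝ) : ℂ) := by
    push_cast; rfl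
  have h := le_deriv_Hmu hf htc hwd hb
  rw [hfactor] at h
  have hnorm := CStarAlgebra.norm_le_norm_of_nonneg_of_le (mul_nonneg
    (mul_nonneg (Complex.zero_le_real.2 toReal_nonneg) (nonneg_of_tc_nonneg hf htc hb))
    (Complex.zero_le_real.2 (by positivity))) h
  rw [norm_mul, norm_mul, norm_mul, Complex.norm_of_nonneg toReal_nonneg,
    Complex.norm_of_nonneg (by positivity), Complex.norm_of_nonneg hb.1] at hnorm
  refine le_of_mul_le_mul_left (hnorm.trans_eq' ?_) hb0
  ring

lemma MemBloch.le_blochNorm {g : ℂ → ℂ} (hg : MemBloch g) {z : ℂ} (hz : z ∈ ball (0 : ℂ) 1) :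
    ‖g 0‖ + (1 - ‖z‖ ^ 2) * ‖deriv g z‖ ≤ blochNorm g := by
  obtain ⟨M, hM⟩ := hg.2
  unfold blochNorm
  gcongr
  refine le_csSup ⟨M, ?_⟩ ⟨z, hz, rfl⟩
  rintro _ ⟨w, hw, rfl⟩
  exact hM w hw

lemma measure_mul_norm_le_blochNorm_Hmu (hf : DifferentiableOn ℂ f (ball 0 1))
    (htc : ∀ k, 0 ≤ tc f k) (hwd : HmuWD μ f) (hbloch : MemBloch (Hmu μ f))
    (hb : b ∈ Ico (0 : ℝ) 1) :
    (μ (Ico b 1)).toReal * ‖f b‖ ≤ 2 * (1 - b) * blochNorm (Hmu μ f) := by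
  have hδ : 0 < 1 - b := sub_pos.2 hb.2
  have hD : 0 < 1 - b ^ 2 := by nlinarith [hb.1]
  set x := (μ (Ico b 1)).toReal * ‖f b‖
  have hx : 0 ≤ x := by positivity
  have hfactor : 1 ≤ 2 * (1 - b) * (1 + b / (1 - b ^ 2)) := by
    rw [show 1 - b ^ 2 = (1 - b) * (1 + b) by ring] at hD ⊢
    have := hb.1
    field_simp
    nlinarith
  calc x ≤ 2 * (1 - b) * (1 + b / (1 - b ^ 2)) * x := le_mul_of_one_le_left hx hfactor
    _ = 2 * (1 - b) * (x + (1 - b ^ 2) * (x * (b / (1 - b ^ 2) ^ 2))) := by field_simp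
    _ ≤ 2 * (1 - b) * (‖Hmu μ f 0‖ + (1 - b ^ 2) * ‖deriv (Hmu μ f) b‖) := by
        gcongr
        · exact measure_mul_norm_le_norm_Hmu_zero hf htc hwd hb
        · exact measure_mul_norm_le_norm_deriv_Hmu hf htc hwd hb
    _ ≤ 2 * (1 - b) * blochNorm (Hmu μ f) := by
        gcongr
        simpa [abs_of_nonneg hb.1] using hbloch.le_blochNorm (ofReal_mem_ball_s4 hb)

end LowerBound

theorem hmu_bounded_Bp_logCarleson_general {p : ℝ} (hp : 1 < p) {μ : Measure ℝ} [IsFiniteMeasure μ]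
    (hwd : ∀ f : ℂ → ℂ, MemBesov p f → HmuWD μ f ∧ MemBloch (Hmu μ f))
    (hbdd : ∃ C > 0, ∀ f : ℂ → ℂ, MemBesov p f → blochNorm (Hmu μ f) ≤ C * besovNorm p f) :
    IsLogCarleson μ (1 - 1 / p) 1 := by
  obtain ⟨C, hC, hHmu⟩ := hbdd
  obtain ⟨K, hK, hnorm⟩ := exists_besovNorm_logTest_le hp
  refine ⟨4 * (C * K), by positivity, fun b hb => ?_⟩
  have hδ : 0 < 1 - b := sub_pos.2 hb.2
  have hf := memBesov_logTest hp hb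
  set m := (μ (Ico b 1)).toReal
  set L := Real.log (2 / (1 - b))
  have hL : 0 < L := (Real.log_pos one_lt_two).trans_le (log_two_le_log hb)
  have hbound : m * (L / 2) ≤ 2 * (1 - b) * (C * (K * L ^ (1 / p))) :=
    calc m * (L / 2) ≤ m * ‖logTest b b‖ := by gcongr; exact half_log_le_norm_logTest hb
      _ ≤ 2 * (1 - b) * blochNorm (Hmu μ (logTest b)) :=
          measure_mul_norm_le_blochNorm_Hmu hf.1 (tc_logTest_nonneg hb) (hwd _ hf).1 (hwd _ hf).2 hb
      _ ≤ 2 * (1 - b) * (C * besovNorm p (logTest b)) := by gcongr; exact hHmu _ hf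
      _ ≤ _ := by gcongr; exact hnorm b hb
  rw [Real.rpow_sub hL, Real.rpow_one, Real.rpow_one, ← mul_div_assoc,
    div_le_iff₀ (Real.rpow_pos_of_pos hL _)]
  linarith

/-- Theorem 1.8: if `1 < p < ∞` and `H_μ` is well defined and bounded on `B^p`, then `μ` is
a `(1 - 1/p)`-logarithmic `1`-Carleson measure. -/
theorem hmu_bounded_Bp_logCarleson (p : ℝ) (hp : 1 < p) (μ : Measure ℝ) [IsFiniteMeasure μ]
    (hsupp : μ (Ico (0:ℝ) 1)ᶜ = 0)
    (hwd : ∀ f : ℂ → ℂ, MemBesov p f → HmuWD μ f ∧ MemBesov p (Hmu μ f))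
    (hbdd : ∃ C > 0, ∀ f : ℂ → ℂ, MemBesov p f →
      besovNorm p (Hmu μ f) ≤ C * besovNorm p f) :
    IsLogCarleson μ (1 - 1/p) 1 := by
  obtain ⟨C, hC, hHmu⟩ := hbdd
  refine hmu_bounded_Bp_logCarleson_general hp
    (fun f hf => ⟨(hwd f hf).1, (hwd f hf).2.memBloch hp.le⟩)
    ⟨(4 ^ (|p - 2| + 2)) ^ (1 / p) * C, by positivity, fun f hf => ?_⟩
  rw [mul_assoc]
  exact ((hwd f hf).2.blochNorm_le hp.le).trans (by gcongr; exact hHmu f hf)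

end PaperHankel
end
end
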